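/- arXiv:2105.11674 — 2 statements merged into one kernel-verified Lean document; each statement's English description precedes it below -/
import Mathlib

section
/- Theorem 3 (unbiasedness of state values under bijective full observability, finite-horizon form): suppose Z s = PMF.pure (ζ s) with ζ : S → O injective, π h = ρ (lastObs h) for all nonempty h, and b is a belief satisfying the Bayes recursion. Then for every nonempty history h whose belief is supported on states consistent with its last observation (i.e., b h s ≠ 0 → ζ s = lastObs h) and every n, VH n h = Σ_s b h s * W n s; that is, v^π(h) = E_{s∼b(h)}[v^π(s)]. -/
/-!
Bayes' rule weighted by the probability of the observation is linear, so averaging the updated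
beliefs over the observations gives back the predicted distribution of the successor state: this is
the law of total expectation. Possible observations lead to beliefs carried by states that can emit
them, and there the policy acts as the Markov policy does. The two Bellman recursions therefore
agree step by step under expectation. When `s` is observed deterministically as `ζ s`, a reactive
policy `ρ` acts as the Markov policy `ρ ∘ ζ`.
-/

/-- The expectation of a real function under a probability mass function on a finite type, as a
finite sum so that no measurable structure has to be chosen. -/
noncomputable def expectation {α : Type*} [Fintype α] (p : PMF α) (f : α → ℝ) : ℝ :=
  ∑ x, (p x).toReal * f x

section Expectation

variable {α β : Type*} [Fintype α] [Fintype β]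

theorem expectation_congr {p : PMF α} {f g : α → ℝ} (hfg : ∀ x, p x ≠ 0 → f x = g x) :
    expectation p f = expectation p g := by
  refine Finset.sum_congr rfl fun x _ => ?_
  by_cases hx : p x = 0
  · simp [hx]
  · rw [hfg x hx]

theorem expectation_add (p : PMF α) (f g : α → ℝ) :
    expectation p (fun x => f x + g x) = expectation p f + expectation p g := by
  simp only [expectation, mul_add, Finset.sum_add_distrib]

theorem expectation_const_mul (p : PMF α) (c : ℝ) (f : α → ℝ) :
    expectation p (fun x => c * f x) = c * expectation p f := by
  simp only [expectation, Finset.mul_sum, mul_left_comm]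

theorem expectation_comm (p : PMF α) (q : PMF β) (f : α → β → ℝ) :
    expectation p (fun x => expectation q (f x)) =
      expectation q (fun y => expectation p (fun x => f x y)) := by
  simp only [expectation, Finset.mul_sum]
  rw [Finset.sum_comm]
  simp only [mul_left_comm]

theorem sum_toReal_pmf_eq_one (p : PMF α) : ∑ x, (p x).toReal = 1 := by
  rw [← ENNReal.toReal_sum fun x _ => p.apply_ne_top x, ← tsum_fintype (L := .unconditional α),
    p.tsum_coe, ENNReal.toReal_one]

end Expectation

/-- A partially observable Markov decision process with transition kernel `T`, observation kernel
`Z` (depending on the successor state only), reward `R` and discount factor `γ`. Only finite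
horizons are considered, so `γ` is an arbitrary real number. -/
structure POMDP (S A O : Type*) where
  T : S → A → PMF S
  Z : S → PMF O
  R : S → A → ℝ
  γ : ℝ

namespace POMDP

variable {S A O : Type*} [Fintype S] (M : POMDP S A O)

/-- The probability `P(t, o | p, a)` of moving to `t` and then observing `o` when `a` is played in
a state drawn from `p`. -/
noncomputable def jointProb (p : PMF S) (a : A) (o : O) (t : S) : ℝ :=
  ∑ s, (p s).toReal * (M.T s a t).toReal * (M.Z t o).toReal

/-- The probability `P(o | p, a)` of observing `o` after `a` is played in a state drawn from
`p`. -/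
noncomputable def obsProb (p : PMF S) (a : A) (o : O) : ℝ :=
  ∑ s, ∑ t, (p s).toReal * (M.T s a t).toReal * (M.Z t o).toReal

/-- `q` is a posterior of `p` after playing `a` and observing `o`. Bayes' rule is stated without
division, so that every `q` is a posterior when `o` has probability zero. -/
def IsBayesUpdate (p : PMF S) (a : A) (o : O) (q : PMF S) : Prop :=
  ∀ t, (q t).toReal * M.obsProb p a o = M.jointProb p a o t

/-- A belief: an assignment of state distributions to histories that follows Bayes' rule along
every action and observation. -/
def IsBelief (b : List (A × O) → PMF S) : Prop :=
  ∀ h a o, M.IsBayesUpdate (b h) a o (b (h ++ [(a, o)]))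

/-- `V n h` is the expected `n`-step discounted return of the policy `π` from the history `h`,
with states estimated by `b`; it is characterised by the Bellman recursion over histories. -/
structure IsHistoryValue [Fintype A] [Fintype O] (π : List (A × O) → PMF A)
    (b : List (A × O) → PMF S) (V : ℕ → List (A × O) → ℝ) : Prop where
  zero : ∀ h, V 0 h = 0
  succ : ∀ n h, V (n + 1) h = expectation (π h) fun a =>
    expectation (b h) (fun s => M.R s a) +
      M.γ * ∑ o, M.obsProb (b h) a o * V n (h ++ [(a, o)])

/-- `W n s` is the expected `n`-step discounted return of the Markov policy `σ` from the state `s`;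
it is characterised by the Bellman recursion over states. -/
structure IsStateValue [Fintype A] (σ : S → PMF A) (W : ℕ → S → ℝ) : Prop where
  zero : ∀ s, W 0 s = 0
  succ : ∀ n s, W (n + 1) s = expectation (σ s) fun a =>
    M.R s a + M.γ * expectation (M.T s a) (W n)

variable {M} {p q : PMF S} {a : A} {o : O}

theorem IsBayesUpdate.emission_ne_zero (hq : M.IsBayesUpdate p a o q)
    (ho : M.obsProb p a o ≠ 0) {t : S} (ht : q t ≠ 0) : M.Z t o ≠ 0 := by
  intro hZ
  have joint_eq_zero : M.jointProb p a o t = 0 := by simp [jointProb, hZ]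
  have ht' : (q t).toReal ≠ 0 := ENNReal.toReal_ne_zero.2 ⟨ht, q.apply_ne_top t⟩
  exact mul_ne_zero ht' ho ((hq t).trans joint_eq_zero)

theorem IsBayesUpdate.obsProb_mul_expectation (hq : M.IsBayesUpdate p a o q) (f : S → ℝ) :
    M.obsProb p a o * expectation q f = ∑ t, M.jointProb p a o t * f t := by
  simp only [expectation, Finset.mul_sum, ← hq _]
  exact Finset.sum_congr rfl fun t _ => by ring

theorem sum_jointProb [Fintype O] (p : PMF S) (a : A) (t : S) :
    ∑ o, M.jointProb p a o t = ∑ s, (p s).toReal * (M.T s a t).toReal := by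
  simp only [jointProb]
  rw [Finset.sum_comm]
  simp only [← Finset.mul_sum, sum_toReal_pmf_eq_one, mul_one]

theorem sum_obsProb_mul_expectation [Fintype O] {q : O → PMF S}
    (hq : ∀ o, M.IsBayesUpdate p a o (q o)) (f : S → ℝ) :
    ∑ o, M.obsProb p a o * expectation (q o) f =
      expectation p fun s => expectation (M.T s a) f := by
  calc ∑ o, M.obsProb p a o * expectation (q o) f
      = ∑ o, ∑ t, M.jointProb p a o t * f t := by
        simp only [(hq _).obsProb_mul_expectation]
    _ = ∑ t, ∑ s, (p s).toReal * (M.T s a t).toReal * f t := by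
        rw [Finset.sum_comm]
        simp only [← Finset.sum_mul, sum_jointProb]
    _ = expectation p fun s => expectation (M.T s a) f := by
        rw [Finset.sum_comm]
        simp only [expectation, Finset.mul_sum, mul_assoc]

theorem IsStateValue.expectation_succ [Fintype A] {σ : S → PMF A} {W : ℕ → S → ℝ}
    (hW : M.IsStateValue σ W) {μ : PMF A} (hμ : ∀ s, p s ≠ 0 → μ = σ s) (n : ℕ) :
    expectation p (W (n + 1)) = expectation μ fun a =>
      expectation p (fun s => M.R s a) +
        M.γ * expectation p fun s => expectation (M.T s a) (W n) := by
  calc expectation p (W (n + 1))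
      = expectation p fun s => expectation μ fun a =>
          M.R s a + M.γ * expectation (M.T s a) (W n) :=
        expectation_congr fun s hs => by rw [hW.succ, hμ s hs]
    _ = expectation μ fun a => expectation p (fun s => M.R s a) +
          M.γ * expectation p fun s => expectation (M.T s a) (W n) := by
        rw [expectation_comm]
        simp only [expectation_add, expectation_const_mul]

end POMDP

theorem unbiased_state_values_bijective_full_observability_general {S A O : Type*}
    [Fintype S] [Fintype A] [Fintype O] (M : POMDP S A O)
    {π : List (A × O) → PMF A} {σ : S → PMF A} {b : List (A × O) → PMF S}
    {V : ℕ → List (A × O) → ℝ} {W : ℕ → S → ℝ}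
    (hb : M.IsBelief b) (hV : M.IsHistoryValue π b V) (hW : M.IsStateValue σ W)
    (hπ : ∀ h a o t, M.Z t o ≠ 0 → π (h ++ [(a, o)]) = σ t)
    (h : List (A × O)) (hh : ∀ s, b h s ≠ 0 → π h = σ s) (n : ℕ) :
    V n h = expectation (b h) (W n) := by
  induction n generalizing h with
  | zero => simp [expectation, hV.zero, hW.zero]
  | succ n ih =>
    have lookahead (a : A) (o : O) : M.obsProb (b h) a o * V n (h ++ [(a, o)]) =
        M.obsProb (b h) a o * expectation (b (h ++ [(a, o)])) (W n) := by
      by_cases ho : M.obsProb (b h) a o = 0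
      · simp only [ho, zero_mul]
      · rw [ih _ fun t ht => hπ h a o t ((hb h a o).emission_ne_zero ho ht)]
    simp only [hV.succ, hW.expectation_succ hh, lookahead,
      POMDP.sum_obsProb_mul_expectation (hb h _)]

/-- Theorem 3 (finite-horizon): under bijective full observability
(deterministic injective observation function) and a reactive policy, the
state value is an unbiased estimate of the history value:
v^π(h) = E_{s∼b(h)}[v^π(s)]. -/
theorem unbiased_state_values_bijective_full_observability
    {S A O : Type*} [Fintype S] [Fintype A] [Fintype O]
    [Nonempty S] [Nonempty A] [Nonempty O]
    (T : S → A → PMF S) (Z : S → PMF O) (R : S → A → ℝ)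
    (γ : ℝ) (hγ0 : 0 ≤ γ) (hγ1 : γ < 1)
    (π : List (A × O) → PMF A)
    (ζ : S → O)
    (hdet : ∀ s : S, Z s = PMF.pure (ζ s))
    (hinj : Function.Injective ζ)
    (ρ : O → PMF A)
    (hreactive : ∀ (h : List (A × O)) (hne : h ≠ []),
      π h = ρ (h.getLast hne).2)
    (b : List (A × O) → PMF S)
    (hb : ∀ (h : List (A × O)) (a : A) (o : O) (s' : S),
      (b (h ++ [(a, o)]) s').toReal *
        (∑ s : S, ∑ t : S, (b h s).toReal * (T s a t).toReal * (Z t o).toReal)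
      = ∑ s : S, (b h s).toReal * (T s a s').toReal * (Z s' o).toReal)
    (VH : ℕ → List (A × O) → ℝ)
    (hVH0 : ∀ h, VH 0 h = 0)
    (hVH : ∀ n h, VH (n + 1) h =
      ∑ a : A, (π h a).toReal *
        ((∑ s : S, (b h s).toReal * R s a) +
          γ * ∑ o : O,
            (∑ s : S, ∑ s' : S,
              (b h s).toReal * (T s a s').toReal * (Z s' o).toReal) *
            VH n (h ++ [(a, o)])))
    (W : ℕ → S → ℝ)
    (hW0 : ∀ s, W 0 s = 0)
    (hW : ∀ n s, W (n + 1) s =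
      ∑ a : A, (ρ (ζ s) a).toReal *
        (R s a + γ * ∑ s' : S, (T s a s').toReal * W n s')) :
    ∀ (h : List (A × O)) (hne : h ≠ []),
      (∀ s : S, b h s ≠ 0 → ζ s = (h.getLast hne).2) →
        ∀ n : ℕ, VH n h = ∑ s : S, (b h s).toReal * W n s := by
  intro h hne hsupp
  refine unbiased_state_values_bijective_full_observability_general ⟨T, Z, R, γ⟩
    (σ := fun s => ρ (ζ s)) hb ⟨hVH0, hVH⟩ ⟨hW0, hW⟩ (fun h a o t ht => ?_) h fun s hs => ?_
  · have ho : o = ζ t := by simpa [hdet] using ht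
    simp [hreactive, ho]
  · rw [hreactive h hne, hsupp s hs]
end

section
/- If a state value function is an unbiased estimator of a history value function, then the induced state action-value function is an unbiased estimator of the induced history action-value function: given Vs : S → ℝ and Vh : List (A × O) → ℝ with Σ_s b h s * Vs s = Vh h for all histories h, defining Qs s a := R s a + γ * Σ_{s'} T s a s' * Vs s' and Qh h a := Σ_s b h s * R s a + γ * Σ_o P(o | h,a) * Vh (h ++ [(a,o)]), one has Σ_s b h s * Qs s a = Qh h a for all h and a. (The first part of the appendix proof sketch for Theorem 2.) -/
/-!
By the Bayes recursion, weighting the posterior mean of `Vs` after `(a, o)` by `P(o | h, a)` gives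
the sum of `Vs s'` against the joint weight of `(s', o)`: the normalization cancels. Summing over
`o` then leaves the law of the successor state `s'`, since each `Z s'` has total mass one, so the
expected next value under the history value function is that under the state value function.
-/

section Belief

variable {ι S A O k : Type*} [Fintype S] [CommSemiring k]

/-- `P(s', o)`, the weight with which a state drawn from `μ` moves to `s'` under `P` and `o` is then
observed under `Z`. Weights lie in a commutative semiring and are not assumed to be normalized. -/
def jointWeight (μ : S → k) (P : S → S → k) (Z : S → O → k) (s' : S) (o : O) : k :=
  ∑ s, μ s * P s s' * Z s' o

/-- `P(o)`, the weight of observing `o` after one transition from `μ`; with `μ = b h` and `P` the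
transition weights of the action `a` this is the paper's `P(o | h, a)`. -/
def observationWeight (μ : S → k) (P : S → S → k) (Z : S → O → k) (o : O) : k :=
  ∑ s, ∑ s', μ s * P s s' * Z s' o

/-- The Bayes recursion for beliefs. It is stated without division, so it does not constrain
the belief after an observation of weight zero. -/
def IsBelief (T : S → A → S → k) (Z : S → O → k) (b : List (A × O) → S → k) : Prop :=
  ∀ h a o s', b (h ++ [(a, o)]) s' * observationWeight (b h) (T · a) Z o =
    jointWeight (b h) (T · a) Z s' o

/-- The state function `f` is an unbiased estimator of `g`: for every index `i` (in the application,
a history), `g i` is the mean of `f` under the weights `b i`. -/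
def IsUnbiased (b : ι → S → k) (f : S → k) (g : ι → k) : Prop :=
  ∀ i, ∑ s, b i s * f s = g i

/-- The state action-value function `Qs` induced by a state value function `V`. -/
def stateActionValue (T : S → A → S → k) (R : S → A → k) (γ : k) (V : S → k) (s : S) (a : A) : k :=
  R s a + γ * ∑ s', T s a s' * V s'

/-- The history action-value function `Qh` induced by a history value function `V`. -/
def historyActionValue [Fintype O] (T : S → A → S → k) (Z : S → O → k) (R : S → A → k) (γ : k)
    (b : List (A × O) → S → k) (V : List (A × O) → k) (h : List (A × O)) (a : A) : k :=
  (∑ s, b h s * R s a) + γ * ∑ o, observationWeight (b h) (T · a) Z o * V (h ++ [(a, o)])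

theorem sum_jointWeight_of_sum_eq_one [Fintype O] (μ : S → k) (P : S → S → k) {Z : S → O → k}
    {s' : S} (hZ : ∑ o, Z s' o = 1) :
    ∑ o, jointWeight μ P Z s' o = ∑ s, μ s * P s s' := by
  simp only [jointWeight]
  rw [Finset.sum_comm]
  simp only [← Finset.mul_sum, hZ, mul_one]

theorem observationWeight_mul_sum_posterior {μ : S → k} {P : S → S → k} {Z : S → O → k} {o : O}
    {β : S → k} (hβ : ∀ s', β s' * observationWeight μ P Z o = jointWeight μ P Z s' o)
    (f : S → k) :
    observationWeight μ P Z o * ∑ s', β s' * f s' = ∑ s', jointWeight μ P Z s' o * f s' := by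
  simp only [Finset.mul_sum, ← hβ, mul_left_comm, mul_assoc]

theorem sum_observationWeight_mul_sum_posterior [Fintype O] {μ : S → k} {P : S → S → k}
    {Z : S → O → k} (hZ : ∀ s', ∑ o, Z s' o = 1) {β : O → S → k}
    (hβ : ∀ o s', β o s' * observationWeight μ P Z o = jointWeight μ P Z s' o) (f : S → k) :
    ∑ o, observationWeight μ P Z o * ∑ s', β o s' * f s' = ∑ s, μ s * ∑ s', P s s' * f s' :=
  calc
    _ = ∑ o, ∑ s', jointWeight μ P Z s' o * f s' :=
      Finset.sum_congr rfl fun o _ => observationWeight_mul_sum_posterior (hβ o) f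
    _ = ∑ s', (∑ o, jointWeight μ P Z s' o) * f s' := by
      rw [Finset.sum_comm]
      simp only [Finset.sum_mul]
    _ = ∑ s', (∑ s, μ s * P s s') * f s' := by
      simp only [sum_jointWeight_of_sum_eq_one μ P (hZ _)]
    _ = ∑ s, μ s * ∑ s', P s s' * f s' :=
      (Matrix.dotProduct_mulVec μ (Matrix.of P) f).symm

theorem sum_mul_stateActionValue (μ : S → k) (T : S → A → S → k) (R : S → A → k) (γ : k)
    (V : S → k) (a : A) :
    ∑ s, μ s * stateActionValue T R γ V s a =
      (∑ s, μ s * R s a) + γ * ∑ s, μ s * ∑ s', T s a s' * V s' := by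
  simp only [stateActionValue, mul_add, Finset.sum_add_distrib, mul_left_comm _ γ,
    ← Finset.mul_sum]

theorem unbiased_state_value_induces_unbiased_action_value_general [Fintype O]
    (T : S → A → S → k) (Z : S → O → k) (hZ : ∀ s, ∑ o, Z s o = 1) (R : S → A → k) (γ : k)
    (b : List (A × O) → S → k) (hb : IsBelief T Z b) {Vs : S → k} {Vh : List (A × O) → k}
    (hV : IsUnbiased b Vs Vh) (a : A) :
    IsUnbiased b (stateActionValue T R γ Vs · a) (historyActionValue T Z R γ b Vh · a) := by
  intro h
  have expected_next_value : ∑ o, observationWeight (b h) (T · a) Z o * Vh (h ++ [(a, o)]) =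
      ∑ s, b h s * ∑ s', T s a s' * Vs s' := by
    simp only [← hV _]
    exact sum_observationWeight_mul_sum_posterior hZ (hb h a) Vs
  simp only [sum_mul_stateActionValue, historyActionValue, expected_next_value]

end Belief

theorem hasSum_pmf_toReal {α : Type*} (p : PMF α) : HasSum (fun x => (p x).toReal) 1 := by
  have h := ENNReal.hasSum_toReal p.tsum_coe_ne_top
  rwa [← ENNReal.tsum_toReal_eq p.apply_ne_top, p.tsum_coe, ENNReal.toReal_one] at h

/-- If a state value function is an unbiased estimator of a history value
function, then the induced state action-value function is an unbiased
estimator of the induced history action-value function. -/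
theorem unbiased_state_value_induces_unbiased_action_value
    {S A O : Type*} [Fintype S] [Fintype A] [Fintype O]
    [Nonempty S] [Nonempty A] [Nonempty O]
    (T : S → A → PMF S) (Z : S → PMF O) (R : S → A → ℝ)
    (γ : ℝ) (hγ0 : 0 ≤ γ) (hγ1 : γ < 1)
    (b : List (A × O) → PMF S)
    (hb : ∀ (h : List (A × O)) (a : A) (o : O) (s' : S),
      (b (h ++ [(a, o)]) s').toReal *
        (∑ s : S, ∑ t : S, (b h s).toReal * (T s a t).toReal * (Z t o).toReal)
      = ∑ s : S, (b h s).toReal * (T s a s').toReal * (Z s' o).toReal)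
    (Vs : S → ℝ) (Vh : List (A × O) → ℝ)
    (hunbiased : ∀ h : List (A × O), (∑ s : S, (b h s).toReal * Vs s) = Vh h)
    (Qs : S → A → ℝ)
    (hQs : ∀ s a, Qs s a = R s a + γ * ∑ s' : S, (T s a s').toReal * Vs s')
    (Qh : List (A × O) → A → ℝ)
    (hQh : ∀ h a, Qh h a =
      (∑ s : S, (b h s).toReal * R s a) +
        γ * ∑ o : O,
          (∑ s : S, ∑ s' : S,
            (b h s).toReal * (T s a s').toReal * (Z s' o).toReal) *
          Vh (h ++ [(a, o)])) :
    ∀ (h : List (A × O)) (a : A),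
      (∑ s : S, (b h s).toReal * Qs s a) = Qh h a := by
  simp only [hQs, hQh]
  exact fun h a => unbiased_state_value_induces_unbiased_action_value_general
    (fun s a s' => (T s a s').toReal) (fun s o => (Z s o).toReal)
    (fun s => (hasSum_fintype _).unique (hasSum_pmf_toReal (Z s))) R γ
    (fun h s => (b h s).toReal) hb hunbiased a h
end
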